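/- Let h be a natural number, M an h×h real matrix, and N a real number. Suppose the characteristic polynomial of M factors as ∏_{i=1}^{h} (X - λᵢ) for real numbers λ₁, ..., λ_h. Then the characteristic polynomial of the 2h×2h matrix Δ := N·I - (block matrix with blocks (0, M; M, 0)) equals ∏_{i=1}^{h} (X - (N - λᵢ))·(X - (N + λᵢ)). -/

import Mathlib

open Polynomial

/-!
Conjugating `fromBlocks A B B A` by the unipotent matrix `fromBlocks 1 1 0 1` makes it block
triangular with diagonal blocks `A + B` and `A - B`. For `A = N • 1` and `B = -M` these are
`N • 1 - M` and `N • 1 + M`, whose characteristic polynomials are substitutions into that of `M`.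
-/

section CommRing

open Matrix

variable {R n : Type*} [CommRing R] [Fintype n] [DecidableEq n]

theorem charpoly_fromBlocks_self_swap (A B : Matrix n n R) :
    (fromBlocks A B B A).charpoly = (A + B).charpoly * (A - B).charpoly := by
  let P : Matrix (n ⊕ n) (n ⊕ n) R := fromBlocks 1 1 0 1
  let Q : Matrix (n ⊕ n) (n ⊕ n) R := fromBlocks 1 (-1) 0 1
  have inverse : Q * P = 1 := by
    simp [P, Q, fromBlocks_multiply]
  have triangularize : P * fromBlocks A B B A * Q = fromBlocks (A + B) 0 B (A - B) := by
    simp only [P, Q, fromBlocks_multiply, one_mul, mul_one, zero_mul, mul_zero, mul_neg, add_zero,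
      zero_add]
    congr 1 <;> abel
  calc (fromBlocks A B B A).charpoly
      = (Q * (P * fromBlocks A B B A)).charpoly := by rw [← mul_assoc, inverse, one_mul]
    _ = (fromBlocks (A + B) 0 B (A - B)).charpoly := by rw [charpoly_mul_comm, triangularize]
    _ = (A + B).charpoly * (A - B).charpoly := charpoly_fromBlocks_zero₁₂ ..

theorem charpoly_smul_one_add (M : Matrix n n R) (c : R) :
    (c • 1 + M).charpoly = M.charpoly.comp (X - C c) := by
  have shift : c • 1 + M = M - scalar n (-c) := by
    rw [map_neg, sub_neg_eq_add, scalar_apply, smul_one_eq_diagonal, add_comm]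
  rw [shift, charpoly_sub_scalar, C_neg, ← sub_eq_add_neg]

theorem charpoly_smul_one_sub (M : Matrix n n R) (c : R) :
    (c • 1 - M).charpoly = (-1) ^ Fintype.card n * M.charpoly.comp (C c - X) := by
  have charmatrix_eq :
      (c • 1 - M).charmatrix = -(compRingHom (C c - X)).mapMatrix M.charmatrix := by
    ext i j : 1
    obtain rfl | hij := eq_or_ne i j
    · simp [sub_sub_eq_add_sub, add_comm]
    · simp [hij]
  rw [charpoly, charmatrix_eq, det_neg, ← RingHom.map_det, coe_compRingHom_apply, charpoly]

theorem charpoly_smul_one_add_of_eq_prod {M : Matrix n n R} {l : n → R}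
    (hM : M.charpoly = ∏ i, (X - C (l i))) (c : R) :
    (c • 1 + M).charpoly = ∏ i, (X - C (c + l i)) := by
  rw [charpoly_smul_one_add, hM, prod_comp]
  exact Finset.prod_congr rfl fun i _ => by simp [sub_sub]

theorem charpoly_smul_one_sub_of_eq_prod {M : Matrix n n R} {l : n → R}
    (hM : M.charpoly = ∏ i, (X - C (l i))) (c : R) :
    (c • 1 - M).charpoly = ∏ i, (X - C (c - l i)) := by
  rw [charpoly_smul_one_sub, hM, prod_comp, ← Finset.card_univ, ← Finset.prod_neg]
  exact Finset.prod_congr rfl fun i _ => by simp [sub_sub_eq_add_sub, add_comm]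

theorem stmt_3_general (M : Matrix n n R) (N : R) (l : n → R)
    (hM : M.charpoly = ∏ i, (X - C (l i))) :
    (N • (1 : Matrix (n ⊕ n) (n ⊕ n) R) - fromBlocks 0 M M 0).charpoly =
      ∏ i, ((X - C (N - l i)) * (X - C (N + l i))) := by
  have laplacian_eq : N • (1 : Matrix (n ⊕ n) (n ⊕ n) R) - fromBlocks 0 M M 0 =
      fromBlocks (N • 1) (-M) (-M) (N • 1) := by
    simp [← fromBlocks_one, fromBlocks_smul, sub_eq_add_neg, fromBlocks_neg, fromBlocks_add]
  rw [laplacian_eq, charpoly_fromBlocks_self_swap, ← sub_eq_add_neg, sub_neg_eq_add,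
    charpoly_smul_one_sub_of_eq_prod hM, charpoly_smul_one_add_of_eq_prod hM,
    Finset.prod_mul_distrib]

end CommRing

/-- If the characteristic polynomial of `M` factors as `∏ i, (X - λ i)` over `ℝ`,
then the characteristic polynomial of `Δ = N • I - fromBlocks 0 M M 0` equals
`∏ i, (X - (N - λ i)) * (X - (N + λ i))`. -/
theorem stmt_3 (h : ℕ) (M : Matrix (Fin h) (Fin h) ℝ) (N : ℝ) (l : Fin h → ℝ)
    (hM : M.charpoly = ∏ i : Fin h, (X - C (l i))) :
    (N • (1 : Matrix (Fin h ⊕ Fin h) (Fin h ⊕ Fin h) ℝ) -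
        Matrix.fromBlocks 0 M M 0).charpoly =
      ∏ i : Fin h, ((X - C (N - l i)) * (X - C (N + l i))) :=
  stmt_3_general M N l hM
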